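/- (Proposition 1, algebraic form.) Let H be a real inner product space, P : H →ₗ[ℝ] H a symmetric linear operator, m, n ∈ ℕ, and b : Fin m → H. Set K := Fin n × Fin m and define the snapshots u_{(l,s)} := T_l(P) (b s). Let M : Matrix K K ℝ be the Gram matrix M_{(j,r),(l,s)} = ⟪u_{(j,r)}, u_{(l,s)}⟫, let R : Matrix K K ℝ be invertible with M = Rᵀ * R, and set v_k := ∑_{l ∈ K} (R⁻¹)_{l,k} • u_l. Then for every coefficient vector c : K → ℝ, every j ∈ Fin n and every r ∈ Fin m, ⟪b r, T_j(P) (∑_{k ∈ K} c_k • v_k)⟫ = ∑_{k ∈ K} c_k · R_{k,(j,r)}. (With c equal to the vector of point values of the reference orthonormalized snapshots at an imaging point y, the left side is the internal wave g(jτ, x_r; y) emanating from the ROM point spread function at y, and the identity reads g(t_j, x_·; y) = V_o(y) R e_j.) -/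

import Mathlib

open Matrix Polynomial Polynomial.Chebyshev
open scoped RealInnerProductSpace

theorem aeval_symm_aux {H : Type*} [NormedAddCommGroup H] [InnerProductSpace ℝ H]
    (P : H →ₗ[ℝ] H) (hsym : ∀ x y : H, ⟪P x, y⟫ = ⟪x, P y⟫) (p : ℝ[X]) :
    ∀ x y : H, ⟪aeval (P : Module.End ℝ H) p x, y⟫ = ⟪x, aeval (P : Module.End ℝ H) p y⟫ := by
  induction p using Polynomial.induction_on' with
  | add p q hp hq =>
    intro x y
    simp only [map_add, LinearMap.add_apply, inner_add_left, inner_add_right, hp, hq]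
  | monomial k a =>
    have hk : ∀ x y : H, ⟪((P : Module.End ℝ H) ^ k) x, y⟫ = ⟪x, ((P : Module.End ℝ H) ^ k) y⟫ := by
      induction k with
      | zero => intro x y; simp
      | succ k ih =>
        intro x y
        have e1 : ((P : Module.End ℝ H) ^ (k + 1)) x = ((P : Module.End ℝ H) ^ k) (P x) := by
          rw [pow_succ]; rfl
        have e2 : ((P : Module.End ℝ H) ^ (k + 1)) y = P (((P : Module.End ℝ H) ^ k) y) := by
          rw [pow_succ']; rfl
        rw [e1, e2, ih, hsym]
    intro x y
    simp only [aeval_monomial, Module.End.mul_apply, Module.algebraMap_end_apply,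
      real_inner_smul_left, real_inner_smul_right, hk]

/-- Proposition 1 (algebraic form): the internal wave evaluated at the sensors is given by
`⟪b r, T_j(P)(∑_k c_k • v_k)⟫ = ∑_k c_k · R_{k,(j,r)}`, i.e. `g(t_j, x_·; y) = V_o(y) R e_j`. -/
theorem internal_wave_formula {H : Type*} [NormedAddCommGroup H] [InnerProductSpace ℝ H]
    (P : H →ₗ[ℝ] H) (hsym : ∀ x y : H, ⟪P x, y⟫ = ⟪x, P y⟫)
    (m n : ℕ) (b : Fin m → H)
    (u : Fin n × Fin m → H)
    (hu : ∀ (l : Fin n) (s : Fin m), u (l, s) = aeval (P : Module.End ℝ H) (T ℝ (l : ℤ)) (b s))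
    (M R : Matrix (Fin n × Fin m) (Fin n × Fin m) ℝ)
    (hM : ∀ k k', M k k' = ⟪u k, u k'⟫)
    (hR : IsUnit R) (hfact : M = Rᵀ * R)
    (v : Fin n × Fin m → H) (hv : ∀ k, v k = ∑ l, R⁻¹ l k • u l)
    (c : Fin n × Fin m → ℝ) (j : Fin n) (r : Fin m) :
    ⟪b r, aeval (P : Module.End ℝ H) (T ℝ (j : ℤ)) (∑ k, c k • v k)⟫ =
      ∑ k, c k * R k (j, r) := by
  have hdet : IsUnit R.det := (Matrix.isUnit_iff_isUnit_det R).1 hR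
  have hMR : M * R⁻¹ = Rᵀ := by
    rw [hfact, Matrix.mul_assoc, Matrix.mul_nonsing_inv _ hdet, Matrix.mul_one]
  rw [← aeval_symm_aux P hsym, ← hu, inner_sum]
  refine Finset.sum_congr rfl fun k _ => ?_
  rw [real_inner_smul_right, hv, inner_sum]
  congr 1
  have h := congrFun (congrFun hMR (j, r)) k
  rw [Matrix.mul_apply, Matrix.transpose_apply] at h
  rw [← h]
  refine Finset.sum_congr rfl fun l _ => ?_
  rw [real_inner_smul_right, hM, mul_comm]
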